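/- If f is a smooth compactly supported function on ℝ², then ‖f‖²_{L²(ℝ²)} = (4π)^{-1} ∫_{-∞}^{∞} ∫_{S¹} |(Rf)~(σ,v)|² |σ| dv dσ, where (Rf)~ denotes the one-dimensional Fourier transform of Rf in the first variable. In particular ‖f‖_{L²(ℝ²)} ≤ (4π)^{-1/2} ‖Rf‖_{H^{1/2}_T(ℝ×S¹)}, where ‖h‖_{H^{1/2}_T} = ‖(1+σ²)^{1/4} h̃(σ,v)‖_{L²(ℝ×S¹)}. -/

import Mathlib

open MeasureTheory Real

/-- The Radon transform of `f : ℝ² → ℂ`: `Rf(s,v) = ∫ f(sv + t v^⊥) dt`. -/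
noncomputable def radonTransform (f : ℝ × ℝ → ℂ) (s : ℝ) (v : ℝ × ℝ) : ℂ :=
  ∫ t : ℝ, f (s * v.1 - t * v.2, s * v.2 + t * v.1)

/-- The one-dimensional Fourier transform `h̃(σ) = (2π)^{-1/2} ∫ h(s) e^{-isσ} ds`. -/
noncomputable def fourier1D (h : ℝ → ℂ) (σ : ℝ) : ℂ :=
  (((2 * π : ℝ) ^ ((1 : ℝ) / 2) : ℝ) : ℂ)⁻¹ * ∫ s : ℝ, h s * Complex.exp (-Complex.I * ((s * σ : ℝ) : ℂ))

open scoped FourierTransform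

namespace RadonAux

/-- the unit vector of angle `θ` -/
noncomputable def e (θ : ℝ) : ℂ := (Real.cos θ : ℂ) + (Real.sin θ : ℂ) * Complex.I

lemma e_eq (θ : ℝ) : e θ = ((Circle.exp θ : Circle) : ℂ) := by
  simp [e, Circle.coe_exp, Complex.exp_mul_I]

lemma norm_e (θ : ℝ) : ‖e θ‖ = 1 := by rw [e_eq]; simp

lemma continuous_e : Continuous e := by unfold e; fun_prop

lemma e_add_pi (θ : ℝ) : e (θ + π) = - e θ := by
  simp only [e, Real.cos_add_pi, Real.sin_add_pi]; push_cast; ring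

lemma e_periodic : Function.Periodic e (2 * π) := by
  intro θ
  simp only [e, Real.cos_add_two_pi, Real.sin_add_two_pi]

/-- integration over `ℂ` in rotated coordinates -/
lemma integral_rot (Φ : ℂ → ℂ) (hΦ : Integrable Φ) (θ : ℝ) :
    ∫ z, Φ z = ∫ s : ℝ, ∫ t : ℝ, Φ (e θ * ((s : ℂ) + t * Complex.I)) := by
  have h1 : MeasurePreserving (rotation (Circle.exp θ)) :=
    (rotation (Circle.exp θ)).measurePreserving
  have h2 := Complex.volume_preserving_equiv_real_prod.symm
  have h3 := h1.integral_comp (rotation (Circle.exp θ)).toHomeomorph.measurableEmbedding Φ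
  have h4 := h2.integral_comp Complex.measurableEquivRealProd.symm.measurableEmbedding
    (fun z => Φ (rotation (Circle.exp θ) z))
  have h5 : Integrable (fun z => Φ (rotation (Circle.exp θ) z)) :=
    h1.integrable_comp_of_integrable hΦ
  have h6 := h2.integrable_comp_of_integrable h5
  rw [← h3, ← h4, Measure.volume_eq_prod, integral_prod]
  · simp only [rotation_apply, ← e_eq, Complex.measurableEquivRealProd_symm_apply]
    simp only [Complex.mk_eq_add_mul_I]
  · exact h6

/-- Fourier slice theorem -/
lemma slice (f : ℝ × ℝ → ℂ) (hf : Continuous f) (hs : HasCompactSupport f) (θ σ : ℝ) :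
    fourier1D (fun s => radonTransform f s (Real.cos θ, Real.sin θ)) σ =
      (((2 * π : ℝ) ^ ((1 : ℝ) / 2) : ℝ) : ℂ)⁻¹ *
        𝓕 (fun z : ℂ => f (z.re, z.im)) (((σ / (2 * π) : ℝ) : ℂ) * e θ) := by
  unfold fourier1D radonTransform
  congr 1
  rw [Real.fourier_eq', integral_rot _ _ θ]
  · refine integral_congr_ae (Filter.Eventually.of_forall fun s => ?_)
    simp only []
    rw [← integral_mul_const]
    refine integral_congr_ae (Filter.Eventually.of_forall fun t => ?_)
    simp only [smul_eq_mul]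
    rw [mul_comm]
    congr 1
    · congr 1
      rw [Complex.inner, mul_comm (((σ / (2 * π) : ℝ) : ℂ) * e θ)]
      have h : (starRingEnd ℂ (e θ * ((s : ℂ) + t * Complex.I)) *
          (((σ / (2 * π) : ℝ) : ℂ) * e θ)).re = s * (σ / (2 * π)) := by
        have h0 := Real.sin_sq_add_cos_sq θ
        simp [e, -Complex.ofReal_cos, -Complex.ofReal_sin, -Complex.ofReal_div]
        linear_combination (s * (σ / (2 * π))) * h0
      rw [h]
      have hpi : (π : ℂ) ≠ 0 := by exact_mod_cast Real.pi_ne_zero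
      push_cast
      field_simp
    · congr 1
      ext <;> simp [e, -Complex.ofReal_cos, -Complex.ofReal_sin] <;> ring
  · have hF : Continuous (fun z : ℂ => f (z.re, z.im)) := by fun_prop
    have hFs : HasCompactSupport (fun z : ℂ => f (z.re, z.im)) :=
      hs.comp_homeomorph Complex.equivRealProdCLM.toHomeomorph
    apply Continuous.integrable_of_hasCompactSupport
    · fun_prop
    · exact HasCompactSupport.smul_left (f := fun v : ℂ => Complex.exp
        (((-2 * π * inner ℝ v (((σ / (2 * π) : ℝ) : ℂ) * e θ) : ℝ) : ℂ) * Complex.I)) hFs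

lemma bound_polar (g : ℂ → ℝ) (C : ℝ) (h : ∀ w, g w ≤ C / (1 + ‖w‖ ^ 2) ^ 2) (σ θ : ℝ) :
    g ((σ : ℂ) * e θ) ≤ C / (1 + σ ^ 2) ^ 2 := by
  have := h ((σ : ℂ) * e θ)
  simpa [norm_e] using this

/-- polar coordinates -/
lemma polar (g : ℂ → ℝ) (hg : Continuous g) (hg0 : ∀ w, 0 ≤ g w) (C : ℝ)
    (hC : ∀ w, g w ≤ C / (1 + ‖w‖ ^ 2) ^ 2) :
    ∫ w, g w = ∫ r in Set.Ioi (0 : ℝ), (∫ θ in (0:ℝ)..(2 * π), g ((r : ℂ) * e θ)) * r := by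
  have hC0 : 0 ≤ C := by have := (hg0 0).trans (hC 0); simpa using this
  rw [← Complex.integral_comp_polarCoord_symm g]
  have ht : polarCoord.target = Set.Ioi (0 : ℝ) ×ˢ Set.Ioo (-π) π := rfl
  have hsymm : ∀ p : ℝ × ℝ, Complex.polarCoord.symm p = (p.1 : ℂ) * e p.2 := by
    intro p; rw [Complex.polarCoord_symm_apply]; rfl
  simp only [hsymm, smul_eq_mul]
  rw [ht, Measure.volume_eq_prod, setIntegral_prod]
  · refine setIntegral_congr_fun measurableSet_Ioi fun r _ => ?_
    simp only []
    rw [integral_const_mul, mul_comm]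
    congr 1
    have hper : Function.Periodic (fun θ => g ((r : ℂ) * e θ)) (2 * π) := by
      intro θ; simp only [e_periodic θ]
    have := hper.intervalIntegral_add_eq 0 (-π)
    rw [zero_add] at this
    rw [this, intervalIntegral.integral_of_le (by linarith [Real.pi_pos]),
      integral_Ioc_eq_integral_Ioo]
    congr 3; ring
  · have hI : Integrable (fun p : ℝ × ℝ => (C * (1 + p.1 ^ 2)⁻¹) * (1 : ℝ))
        ((volume.restrict (Set.Ioi (0 : ℝ))).prod (volume.restrict (Set.Ioo (-π) π))) := by
      apply Integrable.mul_prod (f := fun r : ℝ => C * (1 + r ^ 2)⁻¹) (g := fun _ : ℝ => (1 : ℝ))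
      · exact (integrable_inv_one_add_sq.const_mul C).restrict
      · exact integrable_const _
    rw [IntegrableOn, ← Measure.prod_restrict]
    refine hI.mono' ?_ (Filter.Eventually.of_forall fun p => ?_)
    · have := continuous_e
      exact Continuous.aestronglyMeasurable (by fun_prop)
    · rw [norm_mul, Real.norm_eq_abs, Real.norm_eq_abs, abs_of_nonneg (hg0 _)]
      have hb := bound_polar g C hC p.1 p.2
      have h1 : |p.1| ≤ 1 + p.1 ^ 2 := by
        nlinarith [sq_abs p.1, sq_nonneg (|p.1| - 1), abs_nonneg p.1]
      calc |p.1| * g (↑p.1 * e p.2) ≤ (1 + p.1 ^ 2) * (C / (1 + p.1 ^ 2) ^ 2) := by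
            gcongr; exact hg0 _
        _ = _ := by field_simp

lemma full (g : ℂ → ℝ) (hg : Continuous g) (hg0 : ∀ w, 0 ≤ g w) (C : ℝ)
    (hC : ∀ w, g w ≤ C / (1 + ‖w‖ ^ 2) ^ 2) :
    ∫ σ : ℝ, (∫ θ in (0:ℝ)..(2 * π), g (((σ / (2 * π) : ℝ) : ℂ) * e θ)) * |σ| =
      2 * (2 * π) ^ 2 * ∫ w, g w := by
  have hp := Real.pi_pos
  have heven : ∀ r : ℝ, (∫ θ in (0:ℝ)..(2 * π), g (((-r : ℝ) : ℂ) * e θ)) =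
      ∫ θ in (0:ℝ)..(2 * π), g ((r : ℂ) * e θ) := by
    intro r
    have h1 : ∀ θ, g (((-r : ℝ) : ℂ) * e θ) = (fun θ => g ((r : ℂ) * e θ)) (θ + π) := by
      intro θ; simp [e_add_pi]
    simp_rw [h1]
    rw [intervalIntegral.integral_comp_add_right (fun θ => g ((r : ℂ) * e θ))]
    have hper : Function.Periodic (fun θ => g ((r : ℂ) * e θ)) (2 * π) := by
      intro θ; simp only [e_periodic θ]
    have := hper.intervalIntegral_add_eq 0 π
    rw [zero_add] at this
    rw [this, zero_add, add_comm]
  have habs : ∀ σ : ℝ, (∫ θ in (0:ℝ)..(2 * π), g (((σ / (2 * π) : ℝ) : ℂ) * e θ)) =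
      ∫ θ in (0:ℝ)..(2 * π), g (((|σ| / (2 * π) : ℝ) : ℂ) * e θ) := by
    intro σ
    rcases abs_choice σ with h | h
    · rw [h]
    · rw [h, neg_div, heven]
  rw [integral_congr_ae (Filter.Eventually.of_forall fun σ => congrArg (· * |σ|) (habs σ))]
  rw [integral_comp_abs
    (f := fun σ : ℝ => (∫ θ in (0:ℝ)..(2 * π), g (((σ / (2 * π) : ℝ) : ℂ) * e θ)) * σ),
    polar g hg hg0 C hC]
  have := integral_comp_mul_left_Ioi
    (fun σ : ℝ => (∫ θ in (0:ℝ)..(2 * π), g (((σ / (2 * π) : ℝ) : ℂ) * e θ)) * σ) 0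
    (b := 2 * π) (by positivity)
  rw [mul_zero] at this
  have h2 : ∀ x : ℝ, 2 * π * x / (2 * π) = x := fun x => by field_simp
  simp only [h2, smul_eq_mul] at this
  have h3 : ∀ x : ℝ, (∫ θ in (0:ℝ)..(2 * π), g ((x : ℂ) * e θ)) * (2 * π * x) =
    (2 * π) * ((∫ θ in (0:ℝ)..(2 * π), g ((x : ℂ) * e θ)) * x) := fun x => by ring
  simp_rw [h3] at this
  rw [integral_const_mul] at this
  rw [eq_inv_mul_iff_mul_eq₀ (by positivity)] at this
  rw [← this]
  ring

lemma bigInt (g : ℂ → ℝ) (hg : Continuous g) (hg0 : ∀ w, 0 ≤ g w) (C : ℝ)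
    (hC : ∀ w, g w ≤ C / (1 + ‖w‖ ^ 2) ^ 2) :
    Integrable (fun σ : ℝ => (1 + σ ^ 2) ^ ((1 : ℝ) / 2) *
      ∫ θ in (0:ℝ)..(2 * π), g (((σ / (2 * π) : ℝ) : ℂ) * e θ)) := by
  have hp := Real.pi_pos
  have hC0 : 0 ≤ C := by have := (hg0 0).trans (hC 0); simpa using this
  have hI := (integrable_inv_one_add_sq.const_mul ((2 * π) * (C * (2 * π) ^ 4)))
  refine hI.mono' ?_ (Filter.Eventually.of_forall fun σ => ?_)
  · have h1 : Continuous fun σ : ℝ =>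
        ∫ θ in (0:ℝ)..(2 * π), g (((σ / (2 * π) : ℝ) : ℂ) * e θ) := by
      apply intervalIntegral.continuous_parametric_intervalIntegral_of_continuous'
      have := continuous_e
      unfold Function.uncurry
      fun_prop
    have h2 : Continuous fun σ : ℝ => (1 + σ ^ 2) ^ ((1 : ℝ) / 2) :=
      Continuous.rpow_const (by fun_prop) (fun _ => Or.inr (by norm_num))
    exact (h2.mul h1).aestronglyMeasurable
  · have hb : ∀ θ, ‖g (((σ / (2 * π) : ℝ) : ℂ) * e θ)‖ ≤ C * (2 * π) ^ 4 / (1 + σ ^ 2) ^ 2 := by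
      intro θ
      rw [Real.norm_eq_abs, abs_of_nonneg (hg0 _)]
      refine (bound_polar g C hC _ _).trans ?_
      have h1 : 1 + σ ^ 2 ≤ (2 * π) ^ 2 * (1 + (σ / (2 * π)) ^ 2) := by
        have : (2 * π) ^ 2 * (1 + (σ / (2 * π)) ^ 2) = (2 * π) ^ 2 + σ ^ 2 := by field_simp
        rw [this]; nlinarith [Real.pi_gt_three]
      rw [div_le_div_iff₀ (by positivity) (by positivity)]
      have h2 : (1 + σ ^ 2) ^ 2 ≤ ((2 * π) ^ 2 * (1 + (σ / (2 * π)) ^ 2)) ^ 2 := by gcongr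
      calc C * (1 + σ ^ 2) ^ 2 ≤ C * ((2 * π) ^ 2 * (1 + (σ / (2 * π)) ^ 2)) ^ 2 := by gcongr
        _ = _ := by ring
    have hn := intervalIntegral.norm_integral_le_of_norm_le_const (a := 0) (b := 2 * π)
      (fun θ _ => hb θ)
    rw [sub_zero, abs_of_pos (by positivity)] at hn
    rw [norm_mul, Real.norm_eq_abs ((1 + σ ^ 2) ^ ((1 : ℝ) / 2)), abs_of_nonneg (by positivity)]
    have h3 : (1 + σ ^ 2) ^ ((1 : ℝ) / 2) ≤ 1 + σ ^ 2 := by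
      conv_rhs => rw [← Real.rpow_one (1 + σ ^ 2)]
      exact Real.rpow_le_rpow_of_exponent_le (by nlinarith [sq_nonneg σ]) (by norm_num)
    calc _ ≤ (1 + σ ^ 2) * (C * (2 * π) ^ 4 / (1 + σ ^ 2) ^ 2 * (2 * π)) := by gcongr
      _ = _ := by field_simp

lemma schwartz_decay (H : SchwartzMap ℂ ℂ) :
    ∃ C : ℝ, ∀ w, ‖H w‖ ^ 2 ≤ C / (1 + ‖w‖ ^ 2) ^ 2 := by
  obtain ⟨C0, _, h0⟩ := H.decay 0 0
  obtain ⟨C2, _, h2⟩ := H.decay 2 0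
  refine ⟨(C0 + C2) ^ 2, fun w => ?_⟩
  have a := h0 w
  have b := h2 w
  simp only [norm_iteratedFDeriv_zero] at a b
  rw [le_div_iff₀ (by positivity), ← mul_pow]
  gcongr
  nlinarith

end RadonAux

open RadonAux

/-- for `f ∈ C_c^∞(ℝ²)` one has the Plancherel-type identity
`‖f‖²_{L²(ℝ²)} = (4π)⁻¹ ∫_ℝ ∫_{S¹} |(Rf)~(σ,v)|² |σ| dv dσ` (the circle `S¹`
being parametrized by `v(θ) = (cos θ, sin θ)`, `θ ∈ [0,2π]`), and hence the
stability estimate `‖f‖_{L²} ≤ (4π)^{-1/2} ‖Rf‖_{H^{1/2}_T(ℝ×S¹)}` with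
`‖h‖²_{H^{1/2}_T} = ∫∫ (1+σ²)^{1/2} |h̃(σ,v)|² dv dσ`. -/
theorem radon_sharp_stability (f : ℝ × ℝ → ℂ)
    (hf : ContDiff ℝ (⊤ : ℕ∞) f) (hsupp : HasCompactSupport f) :
    (∫ x : ℝ × ℝ, ‖f x‖ ^ 2) =
      (4 * π)⁻¹ *
        ∫ σ : ℝ, (∫ θ in (0:ℝ)..(2 * π),
          ‖fourier1D (fun s => radonTransform f s (Real.cos θ, Real.sin θ)) σ‖ ^ 2) * |σ| ∧
    Real.sqrt (∫ x : ℝ × ℝ, ‖f x‖ ^ 2) ≤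
      (4 * π) ^ (-(1 : ℝ) / 2) *
        Real.sqrt (∫ σ : ℝ, ∫ θ in (0:ℝ)..(2 * π),
          (1 + σ ^ 2) ^ ((1 : ℝ) / 2) *
            ‖fourier1D (fun s => radonTransform f s (Real.cos θ, Real.sin θ)) σ‖ ^ 2) := by
  have hp := Real.pi_pos
  set F : ℂ → ℂ := fun z => f (z.re, z.im) with hFdef
  have hFs : HasCompactSupport F :=
    hsupp.comp_homeomorph Complex.equivRealProdCLM.toHomeomorph
  have hFc : ContDiff ℝ (⊤ : ℕ∞) F := hf.comp Complex.equivRealProdCLM.contDiff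
  set S : SchwartzMap ℂ ℂ := hFs.toSchwartzMap hFc with hS
  have hSF : (S : ℂ → ℂ) = F := rfl
  set H : SchwartzMap ℂ ℂ := 𝓕 S with hH
  have hHF : ∀ w, 𝓕 F w = H w := fun w => rfl
  obtain ⟨C, hC⟩ := schwartz_decay H
  set g : ℂ → ℝ := fun w => ‖H w‖ ^ 2 with hgdef
  have hg : Continuous g := by have := H.continuous; fun_prop
  have hg0 : ∀ w, 0 ≤ g w := fun w => by positivity
  have hPl : ∫ w, g w = ∫ x : ℝ × ℝ, ‖f x‖ ^ 2 := by
    have h1 : ∫ w, g w = ∫ z, ‖F z‖ ^ 2 := S.integral_norm_sq_fourier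
    rw [h1]
    exact Complex.volume_preserving_equiv_real_prod.integral_comp
      Complex.measurableEquivRealProd.measurableEmbedding (fun x => ‖f x‖ ^ 2)
  have hsl : ∀ σ θ : ℝ,
      ‖fourier1D (fun s => radonTransform f s (Real.cos θ, Real.sin θ)) σ‖ ^ 2 =
        (2 * π)⁻¹ * g (((σ / (2 * π) : ℝ) : ℂ) * e θ) := by
    intro σ θ
    rw [slice f hf.continuous hsupp, norm_mul, mul_pow, norm_inv, Complex.norm_real,
      Real.norm_eq_abs, abs_of_nonneg (by positivity), inv_pow, ← Real.sqrt_eq_rpow,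
      Real.sq_sqrt (by positivity)]
    rfl
  have hA := full g hg hg0 C hC
  have hB := bigInt g hg hg0 C hC
  simp only [hsl]
  have key : (∫ x : ℝ × ℝ, ‖f x‖ ^ 2) = (4 * π)⁻¹ *
      ∫ σ : ℝ, (∫ θ in (0:ℝ)..(2 * π), (2 * π)⁻¹ * g (((σ / (2 * π) : ℝ) : ℂ) * e θ)) * |σ| := by
    simp only [intervalIntegral.integral_const_mul, mul_assoc (2 * π)⁻¹]
    rw [integral_const_mul, hA, hPl]
    field_simp
    ring
  refine ⟨key, ?_⟩
  rw [key, Real.sqrt_mul (by positivity)]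
  have h4 : Real.sqrt (4 * π)⁻¹ = (4 * π) ^ (-(1 : ℝ) / 2) := by
    rw [Real.sqrt_eq_rpow, Real.inv_rpow (by positivity), ← Real.rpow_neg (by positivity)]
    congr 1; ring
  rw [h4]
  refine mul_le_mul_of_nonneg_left (Real.sqrt_le_sqrt ?_) (by positivity)
  apply integral_mono_of_nonneg
  · refine Filter.Eventually.of_forall fun σ => ?_
    refine mul_nonneg (intervalIntegral.integral_nonneg (by positivity) fun θ _ => ?_) (abs_nonneg _)
    exact mul_nonneg (by positivity) (hg0 _)
  · simp only [intervalIntegral.integral_const_mul]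
    refine (hB.const_mul (2 * π)⁻¹).congr (Filter.Eventually.of_forall fun σ => ?_)
    simp only []
    ring
  · refine Filter.Eventually.of_forall fun σ => ?_
    simp only []
    rw [intervalIntegral.integral_const_mul ((1 + σ ^ 2) ^ ((1 : ℝ) / 2)), mul_comm]
    refine mul_le_mul_of_nonneg_right ?_
      (intervalIntegral.integral_nonneg (by positivity) fun θ _ =>
        mul_nonneg (by positivity) (hg0 _))
    rw [← Real.sqrt_eq_rpow]
    exact Real.abs_le_sqrt (by linarith)
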